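/- arXiv:1505.02155 — 2 statements merged into one kernel-verified Lean document; each statement's English description precedes it below -/
import Mathlib

section
/- Let k ≥ 2 be an integer, let t_1,…,t_k be reals with 0 < t_1 ≤ t_2 ≤ ⋯ ≤ t_k, let C_k > 0, and let α > 0, β > 0. For each i = 1,…,k−1 let α_i, β_i, U_i be reals with 0 < α_i ≤ α, 0 < β_i ≤ β, and 0 < U_i ≤ 1. If C_k/t_k + Σ_{i=1}^{k−1} U_i ≤ ((k−1)·((α+β)^{1/k} − 1) + ((α+β)^{1/k} − α))/β, then there exists an index j ∈ {1,…,k} such that C_k + Σ_{i=1}^{k−1} α_i·t_i·U_i + Σ_{i=1}^{j−1} β_i·t_i·U_i ≤ t_j. -/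
/-- k²U framework, total-utilization-bound lemma (Lemma 2). -/
theorem k2u_total_utilization_bound (k : ℕ) (hk : 2 ≤ k)
    (t : ℕ → ℝ) (ht1 : 0 < t 1)
    (htmono : ∀ i j : ℕ, 1 ≤ i → i ≤ j → j ≤ k → t i ≤ t j)
    (Ck : ℝ) (hCk : 0 < Ck)
    (a b : ℝ) (ha : 0 < a) (hb : 0 < b)
    (α β U : ℕ → ℝ)
    (hα : ∀ i ∈ Finset.Icc 1 (k - 1), 0 < α i ∧ α i ≤ a)
    (hβ : ∀ i ∈ Finset.Icc 1 (k - 1), 0 < β i ∧ β i ≤ b)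
    (hU : ∀ i ∈ Finset.Icc 1 (k - 1), 0 < U i ∧ U i ≤ 1)
    (hcond : Ck / t k + (∑ i ∈ Finset.Icc 1 (k - 1), U i) ≤
      (((k : ℝ) - 1) * ((a + b) ^ ((1 : ℝ) / (k : ℝ)) - 1)
        + ((a + b) ^ ((1 : ℝ) / (k : ℝ)) - a)) / b) :
    ∃ j ∈ Finset.Icc 1 k,
      Ck + (∑ i ∈ Finset.Icc 1 (k - 1), α i * t i * U i)
        + (∑ i ∈ Finset.Icc 1 (j - 1), β i * t i * U i) ≤ t j := by
  by_contra hcon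
  push Not at hcon
  have htpos : ∀ i, 1 ≤ i → i ≤ k → 0 < t i := fun i h1 h2 =>
    lt_of_lt_of_le ht1 (htmono 1 i le_rfl h1 h2)
  obtain ⟨m, rfl⟩ : ∃ m, k = m + 1 := ⟨k - 1, by omega⟩
  simp only [Nat.add_sub_cancel] at *
  set r : ℝ := (a + b) ^ ((1 : ℝ) / ((m + 1 : ℕ) : ℝ)) with hr
  have hab : 0 < a + b := by positivity
  have hrpos : 0 < r := Real.rpow_pos_of_pos hab _
  have hm : (0 : ℝ) < ((m + 1 : ℕ) : ℝ) := by positivity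
  have hlogr : ((m + 1 : ℕ) : ℝ) * Real.log r = Real.log (a + b) := by
    rw [hr, Real.log_rpow hab]
    field_simp
  have key : ∀ x : ℝ, 0 < x → r * (1 + Real.log x - Real.log r) ≤ x := by
    intro x hx
    have h := Real.log_le_sub_one_of_pos (div_pos hx hrpos)
    rw [Real.log_div hx.ne' hrpos.ne'] at h
    have h2 : 1 + Real.log x - Real.log r ≤ x / r := by linarith
    have h3 := mul_le_mul_of_nonneg_left h2 hrpos.le
    rwa [mul_div_cancel₀ _ hrpos.ne'] at h3
  set W : ℕ → ℝ := fun n => ∑ i ∈ Finset.Icc 1 n, t i * U i with hW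
  have hWnn : ∀ n, n ≤ m → 0 ≤ W n := by
    intro n hn
    apply Finset.sum_nonneg
    intro i hi
    rw [Finset.mem_Icc] at hi
    exact mul_nonneg (htpos i hi.1 (by omega)).le
      (hU i (Finset.mem_Icc.2 ⟨hi.1, by omega⟩)).1.le
  have hWsucc : ∀ n, W (n + 1) = W n + t (n + 1) * U (n + 1) := by
    intro n
    simp only [hW]
    rw [Finset.sum_Icc_succ_top (by omega)]
  set S : ℝ := Ck + a * W m with hS
  have hSpos : 0 < S := by
    have := mul_nonneg ha.le (hWnn m le_rfl)
    linarith
  have hQpos : ∀ n, n ≤ m → 0 < S + b * W n := by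
    intro n hn
    have := mul_nonneg hb.le (hWnn n hn)
    linarith
  have hlt : ∀ n, n ≤ m → t (n + 1) < S + b * W n := by
    intro n hn
    have h := hcon (n + 1) (Finset.mem_Icc.2 ⟨by omega, by omega⟩)
    simp only [Nat.add_sub_cancel] at h
    have h1 : ∑ i ∈ Finset.Icc 1 m, α i * t i * U i ≤ a * W m := by
      simp only [hW]
      rw [Finset.mul_sum]
      apply Finset.sum_le_sum
      intro i hi
      have hi' := Finset.mem_Icc.1 hi
      rw [mul_assoc]
      exact mul_le_mul_of_nonneg_right (hα i hi).2
        (mul_nonneg (htpos i hi'.1 (by omega)).le (hU i hi).1.le)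
    have h2 : ∑ i ∈ Finset.Icc 1 n, β i * t i * U i ≤ b * W n := by
      simp only [hW]
      rw [Finset.mul_sum]
      apply Finset.sum_le_sum
      intro i hi
      have hi' := Finset.mem_Icc.1 hi
      have hi2 : i ∈ Finset.Icc 1 m := Finset.mem_Icc.2 ⟨hi'.1, by omega⟩
      rw [mul_assoc]
      exact mul_le_mul_of_nonneg_right (hβ i hi2).2
        (mul_nonneg (htpos i hi'.1 (by omega)).le (hU i hi2).1.le)
    linarith
  have hind : ∀ n, n ≤ m →
      r * (n + Real.log (S + b * W n) - Real.log S - n * Real.log r)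
        ≤ b * (∑ i ∈ Finset.Icc 1 n, U i) + n := by
    intro n
    induction n with
    | zero => intro _; simp [hW]
    | succ n ih =>
      intro hn
      have ih' := ih (by omega)
      have hq := hQpos n (by omega)
      have hq1 := hQpos (n + 1) hn
      have hk1 := key _ (div_pos hq1 hq)
      rw [Real.log_div hq1.ne' hq.ne'] at hk1
      have hu := (hU (n + 1) (Finset.mem_Icc.2 ⟨by omega, hn⟩)).1
      have h2 : (S + b * W (n + 1)) / (S + b * W n) ≤ 1 + b * U (n + 1) := by
        rw [div_le_iff₀ hq, hWsucc]
        have := mul_le_mul_of_nonneg_right (hlt n (by omega)).le (mul_pos hb hu).le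
        nlinarith
      rw [Finset.sum_Icc_succ_top (by omega)]
      push_cast
      nlinarith
  have hfin := hind m le_rfl
  have hq := hQpos m le_rfl
  have hk1 := key _ (div_pos (mul_pos hab hSpos) hq)
  rw [Real.log_div (mul_pos hab hSpos).ne' hq.ne', Real.log_mul hab.ne' hSpos.ne'] at hk1
  have htk := htpos (m + 1) (by omega) le_rfl
  have h3 : Ck / (S + b * W m) < Ck / t (m + 1) :=
    div_lt_div_of_pos_left hCk htk (hlt m le_rfl)
  have h4 : (a + b) * S / (S + b * W m) = b * (Ck / (S + b * W m)) + a := by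
    field_simp
    rw [hS]
    ring
  have h5 := mul_lt_mul_of_pos_left h3 hb
  rw [le_div_iff₀ hb] at hcond
  rw [← hlogr] at hk1
  push_cast at hcond hk1
  nlinarith
end

section
/- Let M ≥ 1 and k ≥ 2 be integers, let T_k > 0 and C_k > 0 be reals, and let the higher-priority tasks i = 1,…,k−1 have periods T_i with 0 < T_i ≤ T_k, execution times C_i ≥ 0, and utilizations U_i = C_i/T_i. If (C_k/T_k + 2)·∏_{i=1}^{k−1} (U_i/M + 1) ≤ 3, or if Σ_{i=1}^{k−1} U_i/M ≤ ln( 3/(C_k/T_k + 2) ), then there exists a real t with 0 < t ≤ T_k such that C_k + (1/M)·Σ_{i=1}^{k−1} (⌈t/T_i⌉ + 1)·C_i ≤ t. -/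
theorem k2u_prod (s : Finset ℕ) (u t : ℕ → ℝ) (B : ℝ)
    (hu : ∀ i ∈ s, 0 ≤ u i) (ht : ∀ i ∈ s, 0 ≤ t i)
    (h : ∀ j ∈ s, t j ≤ B + ∑ i ∈ s, if t i < t j then u i * t i else 0) :
    B + ∑ i ∈ s, u i * t i ≤ B * ∏ i ∈ s, (u i + 1) := by
  induction s using Finset.induction_on_max_value t with
  | empty => simp
  | insert a s ha hmax ih =>
    have ih' := ih (fun i hi => hu i (Finset.mem_insert_of_mem hi))
      (fun i hi => ht i (Finset.mem_insert_of_mem hi)) (by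
        intro j hj
        have := h j (Finset.mem_insert_of_mem hj)
        rw [Finset.sum_insert ha, if_neg (not_lt.mpr (hmax j hj)), zero_add] at this
        exact this)
    have h1 := h a (Finset.mem_insert_self a s)
    rw [Finset.sum_insert ha, if_neg (lt_irrefl _), zero_add] at h1
    have h2 : (∑ i ∈ s, if t i < t a then u i * t i else 0) ≤ ∑ i ∈ s, u i * t i := by
      apply Finset.sum_le_sum
      intro i hi
      have := mul_nonneg (hu i (Finset.mem_insert_of_mem hi)) (ht i (Finset.mem_insert_of_mem hi))
      split_ifs
      · exact le_rfl
      · exact this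
    have hua := hu a (Finset.mem_insert_self a s)
    rw [Finset.sum_insert ha, Finset.prod_insert ha]
    have h3 := mul_le_mul_of_nonneg_left (h1.trans (add_le_add_right h2 B)) hua
    have h4 := mul_le_mul_of_nonneg_left ih' (add_nonneg hua zero_le_one)
    linarith

theorem demand_bound (Tk T U t : ℝ) (hT : 0 < T) (hTk : T ≤ Tk) (hU : 0 ≤ U) (ht : t ≤ Tk) :
    ((⌈t / T⌉ : ℝ) + 1) * (U * T) ≤
      2 * (U * (⌊Tk / T⌋ * T)) +
        if (⌊Tk / T⌋ : ℝ) * T < t then U * (⌊Tk / T⌋ * T) else 0 := by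
  have hn : (1 : ℝ) ≤ ⌊Tk / T⌋ := by
    have : (1 : ℤ) ≤ ⌊Tk / T⌋ := by
      rw [Int.le_floor]; push_cast; rwa [one_le_div hT]
    exact_mod_cast this
  have hUT : 0 ≤ U * T := by positivity
  split_ifs with hlt
  · have : (⌈t / T⌉ : ℝ) ≤ ⌊Tk / T⌋ + 1 := by
      have : ⌈t / T⌉ ≤ ⌊Tk / T⌋ + 1 := by
        rw [Int.ceil_le]; push_cast
        exact (div_le_div_of_nonneg_right ht hT.le).trans (Int.lt_floor_add_one _).le
      exact_mod_cast this
    have := mul_le_mul_of_nonneg_right (show (⌈t / T⌉ : ℝ) + 1 ≤ 3 * ⌊Tk / T⌋ by linarith) hUT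
    linarith
  · have : (⌈t / T⌉ : ℝ) ≤ ⌊Tk / T⌋ := by
      have : ⌈t / T⌉ ≤ ⌊Tk / T⌋ := by
        rw [Int.ceil_le, div_le_iff₀ hT]
        exact not_lt.mp hlt
      exact_mod_cast this
    have := mul_le_mul_of_nonneg_right (show (⌈t / T⌉ : ℝ) + 1 ≤ 2 * ⌊Tk / T⌋ by linarith) hUT
    linarith

/-- Theorem 7: hyperbolic-bound greedy carry-in test for implicit-deadline
sporadic tasks under global RM on M identical processors. -/
theorem global_rm_greedy_carry_in (M k : ℕ) (hM : 1 ≤ M) (hk : 2 ≤ k)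
    (Tk Ck : ℝ) (hTk : 0 < Tk) (hCk : 0 < Ck)
    (T C U : ℕ → ℝ)
    (hT : ∀ i ∈ Finset.Icc 1 (k - 1), 0 < T i ∧ T i ≤ Tk)
    (hC : ∀ i ∈ Finset.Icc 1 (k - 1), 0 ≤ C i)
    (hU : ∀ i ∈ Finset.Icc 1 (k - 1), U i = C i / T i)
    (hcond : (Ck / Tk + 2) * (∏ i ∈ Finset.Icc 1 (k - 1), (U i / (M : ℝ) + 1)) ≤ 3 ∨
      (∑ i ∈ Finset.Icc 1 (k - 1), U i / (M : ℝ)) ≤ Real.log (3 / (Ck / Tk + 2))) :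
    ∃ t : ℝ, 0 < t ∧ t ≤ Tk ∧
      Ck + (1 / (M : ℝ)) *
        (∑ i ∈ Finset.Icc 1 (k - 1), ((⌈t / T i⌉ : ℝ) + 1) * C i) ≤ t := by
  have hM0 : (0 : ℝ) < M := by exact_mod_cast hM
  set s := Finset.Icc 1 (k - 1) with hs
  have hU0 : ∀ i ∈ s, 0 ≤ U i := fun i hi => by
    rw [hU i hi]; exact div_nonneg (hC i hi) (hT i hi).1.le
  have hu0 : ∀ i ∈ s, 0 ≤ U i / (M : ℝ) := fun i hi => div_nonneg (hU0 i hi) hM0.le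
  have hq : 0 < Ck / Tk + 2 := by positivity
  have hprod : (Ck / Tk + 2) * (∏ i ∈ s, (U i / (M : ℝ) + 1)) ≤ 3 := by
    rcases hcond with h | h
    · exact h
    · have h1 : ∏ i ∈ s, (U i / (M : ℝ) + 1) ≤ Real.exp (∑ i ∈ s, U i / (M : ℝ)) := by
        rw [Real.exp_sum]
        exact Finset.prod_le_prod (fun i hi => by linarith [hu0 i hi])
          (fun i hi => Real.add_one_le_exp _)
      have h2 := h1.trans (Real.exp_le_exp.mpr h)
      rw [Real.exp_log (by positivity), le_div_iff₀ hq] at h2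
      linarith
  by_contra! hcon
  let t : ℕ → ℝ := fun i => (⌊Tk / T i⌋ : ℝ) * T i
  have htpos : ∀ i ∈ s, 0 < t i := fun i hi => by
    have : (1 : ℤ) ≤ ⌊Tk / T i⌋ := by
      rw [Int.le_floor]; push_cast; rw [one_le_div (hT i hi).1]; exact (hT i hi).2
    have h1 : (1 : ℝ) ≤ ⌊Tk / T i⌋ := by exact_mod_cast this
    exact mul_pos (by linarith) (hT i hi).1
  have htle : ∀ i ∈ s, t i ≤ Tk := fun i hi => by
    have := Int.floor_le (Tk / T i)
    rwa [le_div_iff₀ (hT i hi).1] at this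
  set A := ∑ i ∈ s, U i / (M : ℝ) * t i with hA
  have hA0 : 0 ≤ A := Finset.sum_nonneg fun i hi => mul_nonneg (hu0 i hi) (htpos i hi).le
  have key : ∀ x, 0 < x → x ≤ Tk →
      x < (Ck + 2 * A) + ∑ i ∈ s, if t i < x then U i / (M : ℝ) * t i else 0 := by
    intro x hx hxT
    refine (hcon x hx hxT).trans_le ?_
    rw [add_assoc, hA, Finset.mul_sum, Finset.mul_sum, ← Finset.sum_add_distrib]
    refine add_le_add_right (Finset.sum_le_sum fun i hi => ?_) _
    have hb := demand_bound Tk (T i) (U i) x (hT i hi).1 (hT i hi).2 (hU0 i hi) hxT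
    have hCi : U i * T i = C i := by rw [hU i hi]; exact div_mul_cancel₀ _ (hT i hi).1.ne'
    rw [hCi] at hb
    have hb' := mul_le_mul_of_nonneg_left hb (one_div_nonneg.mpr hM0.le)
    refine hb'.trans (le_of_eq ?_)
    simp only [t]
    split_ifs <;> ring
  have h1 := k2u_prod s (fun i => U i / (M : ℝ)) t (Ck + 2 * A) hu0
    (fun i hi => (htpos i hi).le) (fun j hj => (key (t j) (htpos j hj) (htle j hj)).le)
  have h2 : Tk < Ck + 2 * A + A := by
    refine (key Tk hTk le_rfl).trans_le (add_le_add_right (Finset.sum_le_sum fun i hi => ?_) _)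
    have := mul_nonneg (hu0 i hi) (htpos i hi).le
    split_ifs
    · exact le_rfl
    · exact this
  simp only [← hA] at h1
  set P := ∏ i ∈ s, (U i / (M : ℝ) + 1) with hP
  have h3 : (Ck + 2 * Tk) * P ≤ 3 * Tk := by
    have := mul_le_mul_of_nonneg_left hprod hTk.le
    have e : Tk * ((Ck / Tk + 2) * P) = (Ck + 2 * Tk) * P := by field_simp
    linarith
  have h4 := mul_le_mul_of_nonneg_left h1 (show 0 ≤ Ck + 2 * Tk by positivity)
  have h5 := mul_le_mul_of_nonneg_left h3 (show 0 ≤ Ck + 2 * A by positivity)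
  have h6 := mul_lt_mul_of_pos_left h2 hCk
  nlinarith
end
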